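/- arXiv:2310.14821 — 4 statements merged into one kernel-verified Lean document; each statement's English description precedes it below -/
import Mathlib

section
/- Let f ≥ 1 and n = 3f+1. For every subset H of ZMod n with |H| ≥ 2f+1, there exist three cyclically consecutive elements of H: there is some x ∈ ZMod n with x ∈ H, x+1 ∈ H, and x+2 ∈ H. -/
/-- Among residues modulo `n = 3f+1` (with `f ≥ 1`), any subset of size at
least `2f+1` contains three cyclically consecutive elements. -/
theorem three_cyclically_consecutive (f : ℕ) (hf : 1 ≤ f)
    (H : Finset (ZMod (3 * f + 1))) (hH : 2 * f + 1 ≤ H.card) :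
    ∃ x : ZMod (3 * f + 1), x ∈ H ∧ x + 1 ∈ H ∧ x + 2 ∈ H := by
  by_contra hne
  have hc : Hᶜ.card = 3 * f + 1 - H.card := by
    rw [Finset.card_compl, ZMod.card]
  have hcov : (Finset.univ : Finset (ZMod (3 * f + 1))) ⊆
      (Hᶜ ∪ Hᶜ.image (fun y => y - 1)) ∪ Hᶜ.image (fun y => y - 2) := by
    intro x _
    by_contra hx
    simp only [Finset.mem_union, not_or, Finset.mem_image, Finset.mem_compl] at hx
    obtain ⟨⟨h0, h1⟩, h2⟩ := hx
    refine hne ⟨x, not_not.mp h0, ?_, ?_⟩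
    · by_contra h
      exact h1 ⟨x + 1, h, by ring⟩
    · by_contra h
      exact h2 ⟨x + 2, h, by ring⟩
  have h := Finset.card_le_card hcov
  rw [Finset.card_univ, ZMod.card] at h
  have a := Finset.card_union_le (Hᶜ ∪ Hᶜ.image (fun y => y - 1)) (Hᶜ.image (fun y => y - 2))
  have b := Finset.card_union_le Hᶜ (Hᶜ.image (fun y => y - 1))
  have c := Finset.card_image_le (s := Hᶜ) (f := fun y => y - 1)
  have d := Finset.card_image_le (s := Hᶜ) (f := fun y => y - 2)
  omega
end

section
/- Let f ≥ 1, n = 3f+1, and let H ⊆ ZMod n with |H| ≥ 2f+1 (the honest validators). Then for every natural number a, there exists a natural number i with a ≤ i ≤ a + 3f such that the residues of i, i+1, and i+2 modulo n all lie in H. In other words, under the round-robin schedule in which the primary proposer of round r is validator r mod (3f+1), any window of 3f+3 consecutive rounds contains three consecutive rounds whose primary proposers are all honest. -/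
/-- Lemma `3-consecutive`: with the round-robin schedule assigning round `r`
to validator `r mod (3f+1)`, if at least `2f+1` of the `3f+1` residues are
honest, then any window of `3f+3` consecutive rounds (rounds `a` to `a+3f+2`)
contains three consecutive rounds `i`, `i+1`, `i+2` whose primary proposers
are all honest. -/
theorem three_consecutive_honest_rounds (f : ℕ) (hf : 1 ≤ f)
    (H : Finset (ZMod (3 * f + 1))) (hH : 2 * f + 1 ≤ H.card) (a : ℕ) :
    ∃ i : ℕ, a ≤ i ∧ i ≤ a + 3 * f ∧
      ((i : ZMod (3 * f + 1)) ∈ H ∧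
       ((i + 1 : ℕ) : ZMod (3 * f + 1)) ∈ H ∧
       ((i + 2 : ℕ) : ZMod (3 * f + 1)) ∈ H) := by
  classical
  have hB : Hᶜ.card ≤ f := by
    rw [Finset.card_compl, ZMod.card]; omega
  have hx : ∃ x : ZMod (3 * f + 1),
      x ∉ (Hᶜ ∪ Hᶜ.image (fun y => y - 1)) ∪ Hᶜ.image (fun y => y - 2) := by
    by_contra hcon
    push Not at hcon
    have h0 := Finset.card_eq_of_equiv_fin (Fintype.equivFinOfCardEq (ZMod.card (3 * f + 1)) |>
      (Equiv.subtypeUnivEquiv hcon).trans)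
    have h1 := Finset.card_union_le (Hᶜ ∪ Hᶜ.image (fun y => y - 1)) (Hᶜ.image (fun y => y - 2))
    have h2 := Finset.card_union_le Hᶜ (Hᶜ.image (fun y => y - 1))
    have h3 := Finset.card_image_le (s := Hᶜ) (f := fun y => y - 1)
    have h4 := Finset.card_image_le (s := Hᶜ) (f := fun y => y - 2)
    omega
  obtain ⟨x, hx⟩ := hx
  simp only [Finset.mem_union, Finset.mem_image, Finset.mem_compl, not_or, not_exists, not_and,
    not_not] at hx
  obtain ⟨⟨hx0, hx1⟩, hx2⟩ := hx
  have hc : ((a + (x - a).val : ℕ) : ZMod (3 * f + 1)) = x := by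
    rw [Nat.cast_add, ZMod.natCast_zmod_val]; ring
  refine ⟨a + (x - a).val, by omega, ?_, ?_, ?_, ?_⟩
  · have := ZMod.val_lt (x - (a : ZMod (3 * f + 1)))
    omega
  · rwa [hc]
  · rw [Nat.cast_add, hc, Nat.cast_one]
    by_contra h
    exact hx1 _ h (by ring)
  · rw [Nat.cast_add, hc, Nat.cast_two]
    by_contra h
    exact hx2 _ h (by ring)
end

section
/- Let V be a finite type of validators with |V| = 3f+1 and let Byz ⊆ V with |Byz| ≤ f. Let Block be a type with author : Block → V and round : Block → ℕ and a parent relation P, with ancestry the reflexive-transitive closure of P. Assume: (i) every block b with round(b) ≥ 1 has among its parents blocks of round round(b) − 1 authored by at least 2f+1 pairwise distinct validators; and (ii) honest validators do not equivocate: for every v ∉ Byz and every round r there is at most one block with author v and round r. Let x be a round and let Cert be a set of blocks, all of round x, with pairwise distinct authors and |Cert| ≥ 2f+1 (the blocks of round x certifying a block B). Then every block b with round(b) > x has some element of Cert among its ancestors. -/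
/-- Lemma `recursion-safety`: with `3f+1` validators of which at most `f` are
Byzantine, if every block of round `≥ 1` references parents of the preceding
round from at least `2f+1` distinct authors, honest validators never
equivocate, and `Cert` is a set of at least `2f+1` blocks of round `x` with
pairwise distinct authors (the blocks certifying some block `B`), then every
block of round `> x` has some element of `Cert` among its ancestors.  Here
`P p b` means that `p` is a parent of `b`, and ancestry is the
reflexive-transitive closure of `P`. -/
theorem recursion_safety {V : Type*} [Fintype V] [DecidableEq V]
    {Block : Type*} (author : Block → V) (round : Block → ℕ)
    (P : Block → Block → Prop) (f : ℕ) (hV : Fintype.card V = 3 * f + 1)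
    (Byz : Finset V) (hByz : Byz.card ≤ f)
    (validity : ∀ b : Block, 1 ≤ round b →
      2 * f + 1 ≤ {v : V | ∃ p : Block, P p b ∧ round p = round b - 1 ∧
        author p = v}.ncard)
    (no_equivocation : ∀ v : V, v ∉ Byz → ∀ b₁ b₂ : Block,
      author b₁ = v → author b₂ = v → round b₁ = round b₂ → b₁ = b₂)
    (x : ℕ) (Cert : Set Block)
    (hCertRound : ∀ c ∈ Cert, round c = x)
    (hCertAuthors : ∀ c₁ ∈ Cert, ∀ c₂ ∈ Cert, author c₁ = author c₂ → c₁ = c₂)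
    (hCertCard : 2 * f + 1 ≤ Cert.ncard) :
    ∀ b : Block, x < round b → ∃ c ∈ Cert, Relation.ReflTransGen P c b := by
  have key : ∀ n : ℕ, ∀ b : Block, round b = x + 1 + n →
      ∃ c ∈ Cert, Relation.ReflTransGen P c b := by
    intro n
    induction n with
    | zero =>
      intro b hb
      have hA := validity b (by omega)
      set A : Set V := {v : V | ∃ p : Block, P p b ∧ round p = round b - 1 ∧
        author p = v} with hAdef
      have hC : (author '' Cert).ncard = Cert.ncard :=
        Set.InjOn.ncard_image (fun c₁ h₁ c₂ h₂ h => hCertAuthors c₁ h₁ c₂ h₂ h)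
      have hU := Set.ncard_union_add_ncard_inter A (author '' Cert)
      have hle : (A ∪ author '' Cert).ncard ≤ 3 * f + 1 := by
        rw [← hV, ← Nat.card_eq_fintype_card]
        exact Set.ncard_le_card _
      have hlt : (Byz : Set V).ncard < (A ∩ author '' Cert).ncard := by
        rw [Set.ncard_coe_finset]
        omega
      obtain ⟨v, ⟨⟨p, hp, hpr, hpa⟩, c, hc, hca⟩, hv⟩ :=
        Set.exists_mem_notMem_of_ncard_lt_ncard hlt
      have hcr := hCertRound c hc
      have : c = p := no_equivocation v (by simpa using hv) c p hca hpa (by omega)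
      exact ⟨c, hc, Relation.ReflTransGen.single (this ▸ hp)⟩
    | succ n ih =>
      intro b hb
      have hA := validity b (by omega)
      obtain ⟨v, p, hp, hpr, -⟩ := Set.nonempty_of_ncard_ne_zero (Nat.ne_of_gt (lt_of_lt_of_le (Nat.succ_pos _) hA))
      obtain ⟨c, hc, hcp⟩ := ih p (by omega)
      exact ⟨c, hc, hcp.tail hp⟩
  intro b hb
  exact key (round b - (x + 1)) b (by omega)
end

section
/- Let V be a finite set of validators with |V| = 3f+1 and Byz ⊆ V with |Byz| ≤ f. Let Block be a type with author : Block → V, round : Block → ℕ, a reflexive and transitive ancestor relation ⪯, a bit : Block → Bool (the epoch-change bit), and a predicate certifies : Block → Prop (the block certifies the fast-path transaction tx). Assume: (i) honest chaining: for every v ∉ Byz and blocks b₁, b₂ authored by v with round(b₁) < round(b₂), b₁ ⪯ b₂; (ii) honest bit monotonicity: for every v ∉ Byz and blocks b₁, b₂ authored by v, if bit(b₂) = true and round(b₁) ≥ round(b₂) then bit(b₁) = true; (iii) blocks with the epoch-change bit set do not certify: if bit(b) = true then ¬certifies(b); (iv) the set Committed ⊆ Block is downward closed under ancestry: if b ∈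 Committed and b′ ⪯ b then b′ ∈ Committed. Suppose there is a set C ⊆ V with |C| ≥ 2f+1 such that each v ∈ C authors some block b with certifies(b) (tx is finalized), and a set E ⊆ V with |E| ≥ 2f+1 such that each v ∈ E authors some block b ∈ Committed with bit(b) = true (the epoch is closed). Then some block in Committed certifies tx. -/
/-- Quorum core of Theorem `epoch close safety` for Mysticeti-FPC: if a
fast-path transaction is finalized (blocks certifying it are authored by a
quorum `C` of at least `2f+1` validators) and the epoch is closed (committed
blocks with the epoch-change bit set are authored by a quorum `E` of at least
`2f+1` validators), then some committed block certifies the transaction. -/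
theorem epoch_close_safety {V : Type*} [Fintype V] [DecidableEq V]
    {Block : Type*} (author : Block → V) (round : Block → ℕ)
    (anc : Block → Block → Prop) (bit : Block → Bool)
    (certifies : Block → Prop) (Committed : Set Block)
    (f : ℕ) (hV : Fintype.card V = 3 * f + 1)
    (Byz : Finset V) (hByz : Byz.card ≤ f)
    (anc_refl : ∀ b : Block, anc b b)
    (anc_trans : ∀ b₁ b₂ b₃ : Block, anc b₁ b₂ → anc b₂ b₃ → anc b₁ b₃)
    (honest_chain : ∀ v : V, v ∉ Byz → ∀ b₁ b₂ : Block,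
      author b₁ = v → author b₂ = v → round b₁ < round b₂ → anc b₁ b₂)
    (honest_bit_mono : ∀ v : V, v ∉ Byz → ∀ b₁ b₂ : Block,
      author b₁ = v → author b₂ = v → bit b₂ = true → round b₂ ≤ round b₁ →
      bit b₁ = true)
    (bit_no_certify : ∀ b : Block, bit b = true → ¬ certifies b)
    (committed_closed : ∀ b ∈ Committed, ∀ b' : Block, anc b' b →
      b' ∈ Committed)
    (C : Finset V) (hCcard : 2 * f + 1 ≤ C.card)
    (hC : ∀ v ∈ C, ∃ b : Block, author b = v ∧ certifies b)
    (E : Finset V) (hEcard : 2 * f + 1 ≤ E.card)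
    (hE : ∀ v ∈ E, ∃ b : Block, author b = v ∧ b ∈ Committed ∧ bit b = true) :
    ∃ b ∈ Committed, certifies b := by
  have hex : ∃ v ∈ C ∩ E, v ∉ Byz := by
    by_contra h
    push Not at h
    have h1 : (C ∩ E).card ≤ Byz.card := Finset.card_le_card h
    have h2 := Finset.card_union_add_card_inter C E
    have h3 : (C ∪ E).card ≤ Fintype.card V := Finset.card_le_univ _
    omega
  obtain ⟨v, hv, hvB⟩ := hex
  rw [Finset.mem_inter] at hv
  obtain ⟨b, hb, hcert⟩ := hC v hv.1
  obtain ⟨e, he, hcom, hbit⟩ := hE v hv.2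
  refine ⟨b, ?_, hcert⟩
  rcases lt_or_ge (round b) (round e) with h | h
  · exact committed_closed e hcom b (honest_chain v hvB b e hb he h)
  · exact absurd hcert (bit_no_certify b (honest_bit_mono v hvB b e hb he hbit h))
end
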